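/- Let (𝕊_m)_{m∈ω} be a sequence of separable LMPs (with countable label sets) whose Zhou ordinals ζ_m := Z(𝕊_m) form a strictly increasing sequence with ζ₀ > 0. Then there exists a separable LMP 𝕊 (with countable label set) such that Z(𝕊) ≥ (sup_{m∈ω} ζ_m) + 1. Consequently, the supremum of the Zhou ordinals of separable LMPs has uncountable cofinality. -/

import Mathlib

open MeasureTheory

/-- A labelled Markov process over the measurable space `S` with label set `L`:
each `τ a` is a Markov kernel, i.e. `τ a s` is a subprobability measure for each state `s`,
and `s ↦ τ a s E` is measurable for each measurable `E`. -/
structure LMP (S : Type*) (L : Type*) [MeasurableSpace S] where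
  τ : L → S → Measure S
  prob_le_one : ∀ (a : L) (s : S), τ a s Set.univ ≤ 1
  measurable_eval : ∀ (a : L) (E : Set S), MeasurableSet E → Measurable fun s => τ a s E

namespace LMP

variable {S L : Type*} [MeasurableSpace S]

/-- `A` is `R`-closed: anything related to a point of `A` lies in `A`. -/
def RClosed (R : Set (S × S)) (A : Set S) : Prop :=
  ∀ ⦃x⦄, x ∈ A → ∀ ⦃s⦄, (x, s) ∈ R → s ∈ A

/-- `Σ(R)`: the family of measurable `R`-closed sets. -/
def sigmaCl (R : Set (S × S)) : Set (Set S) :=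
  {A | MeasurableSet A ∧ RClosed R A}

/-- `R(Λ)`: the relation identifying states belonging to exactly the same members of `Λ`. -/
def rel (Λ : Set (Set S)) : Set (S × S) :=
  {p | ∀ A ∈ Λ, p.1 ∈ A ↔ p.2 ∈ A}

/-- `R^T(Λ)`: states assigning the same probabilities to every member of `Λ`, for all labels. -/
def relT (M : LMP S L) (Λ : Set (Set S)) : Set (S × S) :=
  {p | ∀ (a : L), ∀ E ∈ Λ, M.τ a p.1 E = M.τ a p.2 E}

/-- The operator `𝒪`. -/
def Oop (M : LMP S L) (R : Set (S × S)) : Set (S × S) :=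
  M.relT (sigmaCl R)

/-- The operator `𝒢`. -/
def Gop (M : LMP S L) (Λ : Set (Set S)) : Set (Set S) :=
  sigmaCl (M.relT Λ)

/-- The members of the σ-algebra generated by a family of sets. -/
def sigmaGen (U : Set (Set S)) : Set (Set S) :=
  {A | MeasurableSet[MeasurableSpace.generateFrom U] A}

/-- Transfinite iterates of `𝒪`. -/
noncomputable def Oiter (M : LMP S L) (R : Set (S × S)) (α : Ordinal) : Set (S × S) :=
  Ordinal.limitRecOn α R (fun _ prev => M.Oop prev)
    (fun o _ ih => ⋂ (o' : Ordinal) (h : o' < o), ih o' h)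

/-- Transfinite iterates of `𝒢`. -/
noncomputable def Giter (M : LMP S L) (Λ : Set (Set S)) (α : Ordinal) : Set (Set S) :=
  Ordinal.limitRecOn α Λ (fun _ prev => M.Gop prev)
    (fun o _ ih => sigmaGen (⋃ (o' : Ordinal) (h : o' < o), ih o' h))

/-- `Λ` is a sub-σ-algebra of the ambient σ-algebra. -/
structure IsSubSigmaAlgebra (Λ : Set (Set S)) : Prop where
  subset_meas : ∀ A ∈ Λ, MeasurableSet A
  empty_mem : (∅ : Set S) ∈ Λ
  compl_mem : ∀ A ∈ Λ, Aᶜ ∈ Λ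
  iUnion_mem : ∀ f : ℕ → Set S, (∀ n, f n ∈ Λ) → (⋃ n, f n) ∈ Λ

/-- A family `Λ` is stable w.r.t. the process. -/
def Stable (M : LMP S L) (Λ : Set (Set S)) : Prop :=
  ∀ A ∈ Λ, ∀ q : ℚ, 0 ≤ q → q ≤ 1 → ∀ a : L,
    {s : S | ENNReal.ofReal (q : ℝ) < M.τ a s A} ∈ Λ

/-- A state bisimulation: a symmetric relation such that related states agree on
all measurable `R`-closed sets. -/
def IsStateBisim (M : LMP S L) (R : Set (S × S)) : Prop :=
  (∀ p ∈ R, (p.2, p.1) ∈ R) ∧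
    ∀ p ∈ R, ∀ (a : L), ∀ C ∈ sigmaCl R, M.τ a p.1 C = M.τ a p.2 C

/-- State bisimilarity. -/
def stateBisim (M : LMP S L) : Set (S × S) :=
  {p | ∃ R, M.IsStateBisim R ∧ p ∈ R}

/-- Event bisimilarity: related by `R(Λ)` for some stable sub-σ-algebra `Λ`. -/
def eventBisim (M : LMP S L) : Set (S × S) :=
  {p | ∃ Λ : Set (Set S), IsSubSigmaAlgebra Λ ∧ M.Stable Λ ∧ p ∈ rel Λ}

/-- Formulas of the modal logic `𝓛`. -/
inductive LForm (L : Type*) : Type _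
  | top : LForm L
  | and : LForm L → LForm L → LForm L
  | dia : L → {q : ℚ // 0 ≤ q ∧ q < 1} → LForm L → LForm L

/-- Semantics of the logic `𝓛`. -/
def sem (M : LMP S L) : LForm L → Set S
  | LForm.top => Set.univ
  | LForm.and φ ψ => M.sem φ ∩ M.sem ψ
  | LForm.dia a q φ => {s | ENNReal.ofReal ((q : ℚ) : ℝ) < M.τ a s (M.sem φ)}

/-- `σ(⟦𝓛⟧)`: the σ-algebra generated by the sets definable in the logic. -/
def sigmaLogic (M : LMP S L) : Set (Set S) :=
  sigmaGen (Set.range M.sem)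

end LMP

/-- A measurable space is separable if its σ-algebra is countably generated and
separates points. -/
def SeparableMeasurableSpace (S : Type*) [m : MeasurableSpace S] : Prop :=
  (∃ U : Set (Set S), U.Countable ∧ MeasurableSpace.generateFrom U = m) ∧
    ∀ s t : S, s ≠ t → ∃ A : Set S, MeasurableSet A ∧ s ∈ A ∧ t ∉ A

namespace LMP

/-- `ζ` is the Zhou ordinal of `M`: the least ordinal `α` such that `𝒪^α(∼e) = ∼s`. -/
def IsZhou {S L : Type*} [MeasurableSpace S] (M : LMP S L) (ζ : Ordinal) : Prop :=
  M.Oiter M.eventBisim ζ = M.stateBisim ∧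
    ∀ β < ζ, M.Oiter M.eventBisim β ≠ M.stateBisim

end LMP

/-- A labelled Markov process bundled together with its state space and a countable
label set. -/
structure PackedLMP : Type 1 where
  S : Type
  mS : MeasurableSpace S
  L : Type
  cL : Countable L
  M : @LMP S L mS

namespace PackedLMP

/-- The bundled LMP is separable. -/
def Separable (P : PackedLMP) : Prop :=
  letI := P.mS; SeparableMeasurableSpace P.S

/-- `ζ` is the Zhou ordinal of the bundled LMP. -/
def IsZhou (P : PackedLMP) (ζ : Ordinal.{0}) : Prop :=
  letI := P.mS; LMP.IsZhou P.M ζ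

end PackedLMP

/-- The set of Zhou ordinals of separable LMPs. -/
def zhouOrdinals : Set Ordinal.{0} :=
  {ζ | ∃ P : PackedLMP, P.Separable ∧ P.IsZhou ζ}

namespace LMP

section basic
variable {S L : Type*} [MeasurableSpace S] (M : LMP S L)

theorem sigmaCl_anti {R R' : Set (S × S)} (h : R ⊆ R') : sigmaCl R' ⊆ sigmaCl R :=
  fun _ hA => ⟨hA.1, fun _ hx _ hs => hA.2 hx (h hs)⟩

theorem Oop_mono {R R' : Set (S × S)} (h : R ⊆ R') : M.Oop R ⊆ M.Oop R' :=
  fun _ hp a E hE => hp a E (sigmaCl_anti h hE)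

theorem Oop_symm {R : Set (S × S)} {s t : S} (h : (s, t) ∈ M.Oop R) : (t, s) ∈ M.Oop R :=
  fun a E hE => (h a E hE).symm

theorem stateBisim_symm {s t : S} (h : (s, t) ∈ M.stateBisim) : (t, s) ∈ M.stateBisim := by
  obtain ⟨R, hR, hp⟩ := h
  exact ⟨R, hR, hR.1 _ hp⟩

theorem stateBisim_isStateBisim : M.IsStateBisim M.stateBisim := by
  refine ⟨fun p hp => M.stateBisim_symm hp, ?_⟩
  rintro p ⟨R, hR, hp⟩ a C hC
  exact hR.2 p hp a C (sigmaCl_anti (R' := M.stateBisim) (fun q hq => ⟨R, hR, hq⟩) hC)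

theorem stateBisim_eq : M.Oop M.stateBisim = M.stateBisim := by
  have h1 : M.stateBisim ⊆ M.Oop M.stateBisim := fun p hp a E hE =>
    M.stateBisim_isStateBisim.2 p hp a E hE
  refine Set.Subset.antisymm (fun p hp => ⟨M.Oop M.stateBisim, ⟨?_, ?_⟩, hp⟩) h1
  · intro p hp
    exact M.Oop_symm hp
  · intro p hp a C hC
    exact hp a C (sigmaCl_anti h1 hC)

theorem fix_subset {R : Set (S × S)} (h : M.Oop R = R) : R ⊆ M.stateBisim := by
  intro p hp
  refine ⟨R, ⟨?_, ?_⟩, hp⟩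
  · intro p hp
    rw [← h] at hp ⊢
    exact M.Oop_symm hp
  · intro p hp a C hC
    rw [← h] at hp
    exact hp a C hC

theorem stateBisim_subset_eventBisim : M.stateBisim ⊆ M.eventBisim := by
  intro p hp
  refine ⟨sigmaCl M.stateBisim, ⟨fun A hA => hA.1, ⟨MeasurableSet.empty, fun x hx => hx.elim⟩,
    fun A hA => ⟨hA.1.compl, fun x hx s hs hsA => hx (hA.2 hsA (M.stateBisim_symm hs))⟩,
    fun f hf => ⟨MeasurableSet.iUnion fun n => (hf n).1, fun x hx s hs => ?_⟩⟩, ?_, ?_⟩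
  · obtain ⟨n, hn⟩ := Set.mem_iUnion.1 hx
    exact Set.mem_iUnion.2 ⟨n, (hf n).2 hn hs⟩
  · intro A hA q _ _ a
    refine ⟨measurableSet_lt measurable_const (M.measurable_eval a A hA.1), fun x hx s hs => ?_⟩
    have := M.stateBisim_isStateBisim.2 _ hs a A hA
    simp only [Set.mem_ofPred_eq] at hx ⊢
    rwa [← this]
  · intro A hA
    exact ⟨fun h => hA.2 h hp, fun h => hA.2 h (M.stateBisim_symm hp)⟩

theorem Oop_eventBisim : M.Oop M.eventBisim ⊆ M.eventBisim := by
  rintro ⟨s, t⟩ hst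
  let Λ0 : Set (Set S) := {A | ∀ Λ, IsSubSigmaAlgebra Λ → M.Stable Λ → A ∈ Λ}
  have hmeas : IsSubSigmaAlgebra {A : Set S | MeasurableSet A} :=
    ⟨fun A h => h, MeasurableSet.empty, fun A h => MeasurableSet.compl h,
      fun f h => MeasurableSet.iUnion h⟩
  have hmeasS : M.Stable {A : Set S | MeasurableSet A} := fun A hA q _ _ a =>
    measurableSet_lt measurable_const (M.measurable_eval a A hA)
  have h0 : Λ0 ⊆ sigmaCl M.eventBisim := by
    intro A hA
    refine ⟨hA _ hmeas hmeasS, ?_⟩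
    rintro x hx y ⟨Λ, h1, h2, h3⟩
    exact (h3 A (hA Λ h1 h2)).1 hx
  refine ⟨{A | A ∈ Λ0 ∧ (s ∈ A ↔ t ∈ A)}, ⟨fun A hA => (h0 hA.1).1, ⟨?_, by simp⟩, ?_, ?_⟩, ?_,
    fun A hA => hA.2⟩
  · exact fun Λ h1 _ => h1.empty_mem
  · exact fun A hA => ⟨fun Λ h1 h2 => h1.compl_mem A (hA.1 Λ h1 h2), not_congr hA.2⟩
  · refine fun f hf => ⟨fun Λ h1 h2 => h1.iUnion_mem f fun n => (hf n).1 Λ h1 h2, ?_⟩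
    simp only [Set.mem_iUnion]
    exact exists_congr fun n => (hf n).2
  · intro A hA q hq hq' a
    refine ⟨fun Λ h1 h2 => h2 A (hA.1 Λ h1 h2) q hq hq' a, ?_⟩
    have := hst a A (h0 hA.1)
    simp only [Set.mem_ofPred_eq] at this ⊢
    rw [this]

/-- The iterates starting from event bisimilarity. -/
noncomputable def It (α : Ordinal.{0}) : Set (S × S) := M.Oiter M.eventBisim α

theorem It_zero : M.It 0 = M.eventBisim := by
  simp [It, Oiter]

theorem It_succ (α : Ordinal.{0}) : M.It (α + 1) = M.Oop (M.It α) := by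
  simp [It, Oiter]

theorem It_limit {α : Ordinal.{0}} (h : Order.IsSuccLimit α) :
    M.It α = ⋂ (o : Ordinal.{0}) (_ : o < α), M.It o := by
  unfold It Oiter
  rw [Ordinal.limitRecOn_limit _ _ _ _ h]

theorem It_succ_subset (α : Ordinal.{0}) : M.It (α + 1) ⊆ M.It α := by
  induction α using Ordinal.limitRecOn with
  | zero => rw [It_succ, It_zero]; exact M.Oop_eventBisim
  | add_one o ih => rw [It_succ _ (o + 1)]; nth_rw 2 [It_succ]; exact M.Oop_mono ih
  | limit o ho ih =>
    rw [It_succ]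
    nth_rw 2 [It_limit _ ho]
    refine Set.subset_iInter₂ fun b hb => ?_
    refine (M.Oop_mono ?_).trans ((M.It_succ b).symm.subset.trans (ih b hb))
    rw [It_limit _ ho]
    exact Set.iInter₂_subset b hb

theorem It_anti {α β : Ordinal.{0}} (h : α ≤ β) : M.It β ⊆ M.It α := by
  induction β using Ordinal.limitRecOn with
  | zero => rw [nonpos_iff_eq_zero.1 h]
  | add_one o ih =>
    rcases h.eq_or_lt with rfl | h
    · rfl
    · exact (M.It_succ_subset o).trans (ih (Order.lt_add_one_iff.1 h))
  | limit o ho ih =>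
    rcases h.eq_or_lt with rfl | h
    · rfl
    · rw [It_limit _ ho]
      exact Set.iInter₂_subset α h

theorem stateBisim_subset_It (α : Ordinal.{0}) : M.stateBisim ⊆ M.It α := by
  induction α using Ordinal.limitRecOn with
  | zero => rw [It_zero]; exact M.stateBisim_subset_eventBisim
  | add_one o ih => rw [It_succ, ← M.stateBisim_eq]; exact M.Oop_mono ih
  | limit o ho ih =>
    rw [It_limit _ ho]
    exact Set.subset_iInter₂ ih

theorem It_symm (α : Ordinal.{0}) {s t : S} (h : (s, t) ∈ M.It α) : (t, s) ∈ M.It α := by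
  induction α using Ordinal.limitRecOn with
  | zero =>
    rw [It_zero] at h ⊢
    obtain ⟨Λ, h1, h2, h3⟩ := h
    exact ⟨Λ, h1, h2, fun A hA => (h3 A hA).symm⟩
  | add_one o ih => rw [It_succ] at h ⊢; exact M.Oop_symm h
  | limit o ho ih =>
    rw [It_limit _ ho, Set.mem_iInter₂] at h ⊢
    exact fun b hb => ih b hb (h b hb)

theorem stateBisim_of_sep {u w : S} (h : ∀ E ∈ sigmaCl M.stateBisim, u ∈ E → w ∈ E) :
    (u, w) ∈ M.stateBisim := by
  rw [← stateBisim_eq]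
  intro a E hE
  have := h {v | M.τ a v E = M.τ a u E}
    ⟨M.measurable_eval a E hE.1 (measurableSet_singleton _), fun x hx s hs => ?_⟩ rfl
  · exact Eq.symm this
  · exact (M.stateBisim_isStateBisim.2 _ hs a E hE).symm.trans hx

theorem It_eq_of_eq {α β : Ordinal.{0}} (h : α < β) (he : M.It α = M.It β) :
    M.It α = M.stateBisim := by
  refine Set.Subset.antisymm (M.fix_subset ?_) (M.stateBisim_subset_It α)
  rw [← It_succ]
  refine Set.Subset.antisymm (M.It_succ_subset α) ?_
  rw [he]
  exact M.It_anti (Order.add_one_le_of_lt h)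

theorem It_mem_of_sup {p : S × S} {α : Ordinal.{0}} (f : ℕ → Ordinal.{0})
    (h : ∀ n, p ∈ M.It (f n)) (hα : ∀ o < α, ∃ n, o < f n) : p ∈ M.It α := by
  induction α using Ordinal.limitRecOn with
  | zero => exact M.It_anti (zero_le : 0 ≤ f 0) (h 0)
  | add_one o ih =>
    obtain ⟨n, hn⟩ := hα o (Order.lt_add_one_iff.2 le_rfl)
    exact M.It_anti (Order.add_one_le_of_lt hn) (h n)
  | limit o ho ih =>
    rw [It_limit _ ho]
    refine Set.mem_iInter₂.2 fun b hb => ?_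
    obtain ⟨n, hn⟩ := hα b hb
    exact M.It_anti hn.le (h n)

end basic

theorem exists_isZhou {S L : Type} [MeasurableSpace S] (M : LMP S L) :
    ∃ z : Ordinal.{0}, M.IsZhou z := by
  have hex : ∃ α : Ordinal.{0}, M.It α = M.stateBisim := by
    have := not_injective_of_ordinal (M.It)
    simp only [Function.Injective, not_forall] at this
    obtain ⟨a, b, hab, hne⟩ := this
    rcases lt_or_gt_of_ne hne with h | h
    · exact ⟨a, M.It_eq_of_eq h hab⟩
    · exact ⟨b, M.It_eq_of_eq h hab.symm⟩
  obtain ⟨z, hz, hmin⟩ := WellFounded.has_min (wellFounded_lt (α := Ordinal.{0}))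
    {α | M.It α = M.stateBisim} hex
  exact ⟨z, hz, fun β hβ h => hmin β h hβ⟩

end LMP

theorem SeparableMeasurableSpace.exists_seq {S : Type} [m : MeasurableSpace S]
    (h : SeparableMeasurableSpace S) : ∃ g : ℕ → Set S, (∀ n, MeasurableSet (g n)) ∧
      ∀ s t, (∀ n, s ∈ g n ↔ t ∈ g n) → s = t := by
  obtain ⟨⟨U, hU, hgen⟩, hsep⟩ := h
  obtain ⟨g, hg⟩ := (hU.insert ∅).exists_eq_range (Set.insert_nonempty ∅ U)
  have hUm : ∀ u ∈ U, MeasurableSet u := fun u hu => by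
    rw [← hgen]; exact MeasurableSpace.measurableSet_generateFrom hu
  refine ⟨g, fun n => ?_, fun s t hst => ?_⟩
  · have : g n ∈ insert ∅ U := hg ▸ Set.mem_range_self n
    rcases this with h | h
    · rw [h]; exact MeasurableSet.empty
    · exact hUm _ h
  · by_contra hne
    obtain ⟨A, hA, hs, ht⟩ := hsep s t hne
    suffices H : s ∈ A ↔ t ∈ A from ht (H.1 hs)
    clear hs ht
    rw [← hgen] at hA
    induction A, hA using MeasurableSpace.generateFrom_induction with
    | hC u hu _ =>
      have : u ∈ Set.range g := hg ▸ Set.mem_insert_of_mem _ hu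
      obtain ⟨n, rfl⟩ := this
      exact hst n
    | empty => simp
    | compl u _ ih => exact not_congr ih
    | iUnion f _ ih =>
      simp only [Set.mem_iUnion]
      exact exists_congr ih

theorem exists_not_nullMeasurable :
    ∃ V : Set UnitAddCircle, ¬ NullMeasurableSet V (volume : Measure UnitAddCircle) := by
  let φ : ℚ →+ UnitAddCircle :=
    (QuotientAddGroup.mk' (AddSubgroup.zmultiples (1 : ℝ))).comp (Rat.castHom ℝ).toAddMonoidHom
  let G : AddSubgroup UnitAddCircle := φ.range
  have hc : Countable G := by
    have : (Set.range φ).Countable := Set.countable_range φ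
    exact this.to_subtype
  have hi : Infinite G := by
    have hinj : Function.Injective (fun n : ℕ => φ (1 / ((n : ℚ) + 2))) := by
      intro m n hmn
      have h1 : ∀ n : ℕ, ((1 / ((n : ℝ) + 2)) : ℝ) ∈ Set.Ico (0 : ℝ) (0 + 1) := fun n => by
        refine ⟨by positivity, ?_⟩
        rw [zero_add, div_lt_one (by positivity)]
        have : (0 : ℝ) ≤ n := by positivity
        linarith
      have h2 : (((1 / ((m : ℝ) + 2)) : ℝ) : UnitAddCircle) = ((1 / ((n : ℝ) + 2) : ℝ) : UnitAddCircle) := by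
        have h3 : ∀ n : ℕ, φ (1 / ((n : ℚ) + 2)) = (((1 / ((n : ℝ) + 2)) : ℝ) : UnitAddCircle) := by
          intro n
          show (((1 / ((n : ℚ) + 2) : ℚ) : ℝ) : UnitAddCircle) = _
          push_cast
          rfl
        rw [← h3, ← h3]
        exact hmn
      rw [AddCircle.coe_eq_coe_iff_of_mem_Ico (h1 m) (h1 n)] at h2
      have : (m : ℝ) + 2 = n + 2 := by
        have := congrArg (fun x : ℝ => x⁻¹) h2
        simpa using this
      exact_mod_cast (add_right_cancel this)
    exact Infinite.of_injective (fun n : ℕ => (⟨φ (1 / ((n : ℚ) + 2)), ⟨_, rfl⟩⟩ : G))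
      fun m n h => hinj (congrArg Subtype.val h)
  let V : Set UnitAddCircle := Set.range (fun q : UnitAddCircle ⧸ G => q.out)
  refine ⟨V, fun hV => ?_⟩
  have hfd : IsAddFundamentalDomain G V (volume : Measure UnitAddCircle) := by
    refine IsAddFundamentalDomain.mk' hV fun x => ?_
    have hx : -x + (QuotientAddGroup.mk x : UnitAddCircle ⧸ G).out ∈ G := by
      rw [← QuotientAddGroup.eq, QuotientAddGroup.out_eq']
    refine ⟨⟨_, hx⟩, ⟨QuotientAddGroup.mk x, ?_⟩, ?_⟩
    · simp [AddSubgroup.vadd_def]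
    · rintro ⟨g, hg⟩ ⟨q, hq⟩
      have hq' : q.out = g + x := hq
      have : q = QuotientAddGroup.mk x := by
        rw [← QuotientAddGroup.out_eq' q, hq', QuotientAddGroup.eq]
        have : -(g + x) + x = -g := by abel
        rw [this]; exact G.neg_mem hg
      rw [Subtype.mk.injEq, ← this, hq']
      abel
  have h1 := hfd.measure_eq_tsum (Set.univ)
  simp only [Set.vadd_set_univ, Set.univ_inter, AddCircle.measure_univ] at h1
  by_cases h0 : (volume : Measure UnitAddCircle) V = 0
  · simp [h0] at h1
  · rw [ENNReal.tsum_const_eq_top_of_ne_zero h0] at h1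
    simp at h1

/-- The σ-algebra generated by `m` and one more set `V`. -/
@[reducible]
def extMS {Y : Type} (m : MeasurableSpace Y) (V : Set Y) : MeasurableSpace Y :=
  m ⊔ MeasurableSpace.generateFrom {V}

theorem exists_gadget : ∃ (Y : Type) (mY : MeasurableSpace Y) (g : ℕ → Y → Bool)
    (ν : Bool → Measure Y), SeparableMeasurableSpace Y ∧ (∀ n, Measurable (g n)) ∧
    (∀ y y', (∀ n, g n y = g n y') → y = y') ∧ (∀ b, ν b Set.univ ≤ 1) ∧
    (∀ n E, (∀ y y', (∀ m < n, g m y = g m y') → y ∈ E → y' ∈ E) → ν true E = ν false E) ∧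
    ∃ V, MeasurableSet V ∧ ν true V ≠ ν false V := by
  classical
  obtain ⟨V, hV⟩ := exists_not_nullMeasurable
  let Y := UnitAddCircle
  let m0 : MeasurableSpace Y := inferInstance
  let μ : Measure Y := volume
  have hsep0 : SeparableMeasurableSpace Y := by
    refine ⟨?_, fun s t hst => ⟨{s}, measurableSet_singleton s, rfl, fun h => hst h.symm⟩⟩
    obtain ⟨U, hU, h⟩ := MeasurableSpace.CountablyGenerated.isCountablyGenerated (α := Y)
    exact ⟨U, hU, h.symm⟩
  obtain ⟨c, hcm, hcs⟩ := hsep0.exists_seq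
  let H : Set Y := toMeasurable μ V ∩ toMeasurable μ Vᶜ
  have hHm : MeasurableSet H := (measurableSet_toMeasurable _ _).inter (measurableSet_toMeasurable _ _)
  have hH : μ H ≠ 0 := by
    intro h
    apply hV
    refine (measurableSet_toMeasurable μ V).nullMeasurableSet.congr ?_
    refine (ae_eq_set.2 ⟨measure_mono_null ?_ h, ?_⟩)
    · exact fun x hx => ⟨hx.1, subset_toMeasurable μ Vᶜ hx.2⟩
    · rw [Set.sdiff_eq_empty.2 (subset_toMeasurable μ V), measure_empty]
  let W : Bool → Set Y := fun b => (if b then V else Vᶜ) ∩ H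
  let o : Bool → OuterMeasure Y := fun b => OuterMeasure.restrict (W b) μ.toOuterMeasure
  have ho : ∀ b E, o b E = μ (E ∩ W b) := fun b E => by
    simp [o]
  have hcar : ∀ b, (extMS m0 V) ≤ (o b).caratheodory := by
    intro b
    refine sup_le ?_ (MeasurableSpace.generateFrom_le ?_)
    · intro E hE
      rw [OuterMeasure.isCaratheodory_iff]
      intro t
      rw [ho, ho, ho]
      have := measure_inter_add_sdiff (μ := μ) (t ∩ W b) hE
      rw [← this]
      congr 2 <;> (ext; simp; tauto)
    · intro u hu
      rw [Set.mem_singleton_iff] at hu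
      subst u
      rw [OuterMeasure.isCaratheodory_iff]
      intro t
      rw [ho, ho, ho]
      cases b
      · have h1 : t ∩ V ∩ W false = ∅ := by ext; simp [W]; tauto
        have h2 : (t \ V) ∩ W false = t ∩ W false := by ext; simp [W]; tauto
        rw [h1, h2]; simp
      · have h1 : (t \ V) ∩ W true = ∅ := by ext; simp [W]; tauto
        have h2 : (t ∩ V) ∩ W true = t ∩ W true := by ext; simp [W]; tauto
        rw [h1, h2]; simp
  let ν : Bool → @Measure Y (extMS m0 V) := fun b => @OuterMeasure.toMeasure Y (extMS m0 V) (o b) (hcar b)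
  have hν : ∀ b E, MeasurableSet[extMS m0 V] E → ν b E = μ (E ∩ W b) := fun b E hE => by
    rw [← ho]
    exact @toMeasure_apply Y (extMS m0 V) (o b) (hcar b) E hE
  have hm01 : m0 ≤ (extMS m0 V) := le_sup_left
  have hν0 : ∀ b E, MeasurableSet[m0] E → ν b E = μ (E ∩ H) := fun b E hE => by
    rw [hν b E (hm01 _ hE)]
    have key : ∀ A : Set Y, μ (E ∩ (A ∩ (toMeasurable μ A ∩ H))) = μ (E ∩ (toMeasurable μ A ∩ H)) := by
      intro A
      have := Measure.measure_toMeasurable_inter (μ := μ) (t := A) (s := E ∩ H) (hE.inter hHm) (measure_ne_top _ _)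
      have e1 : E ∩ (toMeasurable μ A ∩ H) = toMeasurable μ A ∩ (E ∩ H) := by ext; simp; tauto
      have e2 : E ∩ (A ∩ (toMeasurable μ A ∩ H)) = A ∩ (E ∩ H) := by
        ext x; have := @subset_toMeasurable _ _ μ A x; simp; tauto
      rw [e1, e2, this]
    cases b
    · have := key Vᶜ
      rwa [Set.inter_eq_right.2 (show H ⊆ toMeasurable μ Vᶜ from Set.inter_subset_right)] at this
    · have := key V
      rwa [Set.inter_eq_right.2 (show H ⊆ toMeasurable μ V from Set.inter_subset_left)] at this
  have hVm : MeasurableSet[extMS m0 V] V := (le_sup_right : _ ≤ (extMS m0 V)) _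
    (MeasurableSpace.measurableSet_generateFrom rfl)
  refine ⟨Y, (extMS m0 V), fun n y => decide (y ∈ c n), ν, ⟨?_, ?_⟩, ?_, ?_, ?_, ?_, V, hVm, ?_⟩
  · obtain ⟨U, hU, hg⟩ := hsep0.1
    refine ⟨U ∪ {V}, hU.union (Set.countable_singleton _), ?_⟩
    rw [← MeasurableSpace.generateFrom_sup_generateFrom, hg]
  · intro s t hst
    obtain ⟨A, hA, h⟩ := hsep0.2 s t hst
    exact ⟨A, hm01 _ hA, h⟩
  · intro n
    refine Measurable.mono (?_ : @Measurable _ _ m0 _ _) hm01 le_rfl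
    refine measurable_to_bool ?_
    convert hcm n
    ext; simp
  · intro y y' h
    exact hcs y y' fun n => by simpa using h n
  · intro b
    rw [hν0 b _ MeasurableSet.univ]
    refine (measure_mono (Set.subset_univ _)).trans ?_
    exact (AddCircle.measure_univ 1).trans_le (by simp)
  · intro n E hE
    suffices h : MeasurableSet[m0] E by rw [hν0 _ _ h, hν0 _ _ h]
    let G : Y → (Fin n → Bool) := fun y i => decide (y ∈ c i)
    have hG : @Measurable _ _ m0 _ G := by
      refine measurable_pi_lambda _ fun i => measurable_to_bool ?_
      convert hcm i
      ext; simp [G]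
    have : E = G ⁻¹' (G '' E) := by
      refine Set.Subset.antisymm (Set.subset_preimage_image _ _) ?_
      rintro y ⟨y', hy', hyy⟩
      refine hE y' y (fun m hm => ?_) hy'
      exact congrFun hyy ⟨m, hm⟩
    rw [this]
    exact hG (Set.toFinite _).measurableSet
  · rw [hν _ _ hVm, hν _ _ hVm]
    have h1 : V ∩ W false = ∅ := by ext; simp [W]; tauto
    have h2 : V ∩ W true = Set.univ ∩ W true := by ext; simp [W]
    rw [h1, h2, ← hν _ _ MeasurableSet.univ, hν0 _ _ MeasurableSet.univ]
    simpa using hH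

section pieces
variable {X T : Type} [MeasurableSpace X] [MeasurableSpace T]

theorem piece_gen {f : X → T} (hf : MeasurableEmbedding f) (hX : SeparableMeasurableSpace X) :
    ∃ U : Set (Set T), U.Countable ∧ (∀ u ∈ U, MeasurableSet u) ∧
      ∀ A : Set X, MeasurableSet A → MeasurableSet[MeasurableSpace.generateFrom U] (f '' A) := by
  obtain ⟨⟨U, hU, hgen⟩, -⟩ := hX
  refine ⟨insert (Set.range f) ((fun A => f '' A) '' U), (hU.image _).insert _, ?_, ?_⟩
  · rintro u (rfl | ⟨A, hA, rfl⟩)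
    · exact hf.measurableSet_range
    · refine hf.measurableSet_image.2 ?_
      rw [← hgen]; exact MeasurableSpace.measurableSet_generateFrom hA
  · intro A hA
    rw [← hgen] at hA
    induction A, hA using MeasurableSpace.generateFrom_induction with
    | hC u hu _ =>
      exact MeasurableSpace.measurableSet_generateFrom (Or.inr ⟨u, hu, rfl⟩)
    | empty => simp
    | compl u _ ih =>
      rw [← Set.range_sdiff_image hf.injective]
      exact (MeasurableSpace.measurableSet_generateFrom (Or.inl rfl)).diff ih
    | iUnion g _ ih =>
      rw [Set.image_iUnion]
      exact MeasurableSet.iUnion ih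

theorem piece_sep {f : X → T} (hf : MeasurableEmbedding f) (hX : SeparableMeasurableSpace X)
    (p : X) (t : T) (h : f p ≠ t) : ∃ A : Set T, MeasurableSet A ∧ f p ∈ A ∧ t ∉ A := by
  by_cases ht : t ∈ Set.range f
  · obtain ⟨q, rfl⟩ := ht
    obtain ⟨A, hA, h1, h2⟩ := hX.2 p q (fun e => h (e ▸ rfl))
    refine ⟨f '' A, hf.measurableSet_image.2 hA, ⟨p, h1, rfl⟩, ?_⟩
    rwa [hf.injective.mem_set_image]
  · exact ⟨Set.range f, hf.measurableSet_range, ⟨p, rfl⟩, ht⟩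

end pieces

namespace Constr

variable {S : ℕ → Type} [mS : ∀ m, MeasurableSpace (S m)] {L : ℕ → Type}
  {Y : Type} [mY : MeasurableSpace Y]

/-- The state space of the sum process. -/
abbrev St (S : ℕ → Type) (Y : Type) : Type := (Σ m, S m) ⊕ (Y ⊕ Bool)

/-- The labels of the sum process. -/
abbrev Lb : Type := ℕ ⊕ (ℕ ⊕ (ℕ ⊕ Unit))

/-- Embedding of the `m`-th component. -/
def emb (m : ℕ) (s : S m) : St S Y := Sum.inl ⟨m, s⟩

theorem measurableSet_sigma {A : Set (Σ m, S m)} :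
    MeasurableSet A ↔ ∀ m, MeasurableSet (Sigma.mk m ⁻¹' A) := by
  exact MeasurableSpace.measurableSet_iInf

theorem measurableSet_St {A : Set (St S Y)} :
    MeasurableSet A ↔ (∀ m, MeasurableSet (emb m ⁻¹' A)) ∧
      MeasurableSet ((fun y => Sum.inr (Sum.inl y)) ⁻¹' A) := by
  rw [measurableSet_sum_iff, measurableSet_sum_iff, measurableSet_sigma]
  constructor
  · rintro ⟨h1, h2, h3⟩
    exact ⟨h1, h2⟩
  · rintro ⟨h1, h2⟩
    exact ⟨h1, h2, (Set.toFinite _).measurableSet⟩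

theorem measurable_St {β : Type*} [MeasurableSpace β] {f : St S Y → β}
    (h1 : ∀ m, Measurable fun s : S m => f (emb m s))
    (h2 : Measurable fun y => f (Sum.inr (Sum.inl y))) : Measurable f :=
  fun _ hE => measurableSet_St.2 ⟨fun m => h1 m hE, h2 hE⟩

theorem measurable_emb (m : ℕ) : Measurable (emb m : S m → St S Y) :=
  fun _ hE => (measurableSet_St.1 hE).1 m

theorem measurable_embY : Measurable (fun y => Sum.inr (Sum.inl y) : Y → St S Y) :=
  fun _ hE => (measurableSet_St.1 hE).2

theorem emb_inj (m : ℕ) : Function.Injective (emb m : S m → St S Y) := by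
  intro a b h
  simpa [emb] using h

theorem emb_embedding (m : ℕ) : MeasurableEmbedding (emb m : S m → St S Y) := by
  refine ⟨emb_inj m, measurable_emb m, fun A hA => measurableSet_St.2 ⟨fun k => ?_, ?_⟩⟩
  · by_cases h : k = m
    · subst h
      rwa [Set.preimage_image_eq _ (emb_inj k)]
    · convert MeasurableSet.empty
      ext x
      simp only [Set.mem_preimage, Set.mem_image, emb, Set.mem_empty_iff_false, iff_false]
      rintro ⟨y, _, hy⟩
      simp only [Sum.inl.injEq, Sigma.mk.injEq] at hy
      exact h hy.1.symm
  · convert MeasurableSet.empty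
    ext x
    simp [emb]

theorem embY_embedding :
    MeasurableEmbedding (fun y => Sum.inr (Sum.inl y) : Y → St S Y) := by
  refine ⟨fun a b h => by simpa using h, measurable_embY,
    fun A hA => measurableSet_St.2 ⟨fun k => ?_, ?_⟩⟩
  · convert MeasurableSet.empty
    ext x
    simp [emb]
  · rwa [Set.preimage_image_eq _ (fun a b h => by simpa using h)]

theorem embB_embedding :
    MeasurableEmbedding (fun b => Sum.inr (Sum.inr b) : Bool → St S Y) := by
  refine ⟨fun a b h => by simpa using h, fun _ _ => (Set.toFinite _).measurableSet,
    fun A hA => measurableSet_St.2 ⟨fun k => ?_, ?_⟩⟩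
  · convert MeasurableSet.empty
    ext x
    simp [emb]
  · convert MeasurableSet.empty
    ext x
    simp

theorem separable_Bool : SeparableMeasurableSpace Bool := by
  refine ⟨?_, fun s t hst => ⟨{s}, measurableSet_singleton s, rfl, fun h => hst h.symm⟩⟩
  obtain ⟨U, hU, h⟩ := MeasurableSpace.CountablyGenerated.isCountablyGenerated (α := Bool)
  exact ⟨U, hU, h.symm⟩

theorem separable_St (hS : ∀ m, SeparableMeasurableSpace (S m))
    (hY : SeparableMeasurableSpace Y) : SeparableMeasurableSpace (St S Y) := by
  constructor
  · choose U hU hUm hUg using fun m => piece_gen (emb_embedding (S := S) (Y := Y) m) (hS m)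
    obtain ⟨V, hV, hVm, hVg⟩ := piece_gen (embY_embedding (S := S) (Y := Y)) hY
    obtain ⟨W, hW, hWm, hWg⟩ := piece_gen (embB_embedding (S := S) (Y := Y)) separable_Bool
    refine ⟨(⋃ m, U m) ∪ (V ∪ W), (Set.countable_iUnion hU).union (hV.union hW), ?_⟩
    refine le_antisymm (MeasurableSpace.generateFrom_le ?_) ?_
    · rintro u (hu | hu | hu)
      · obtain ⟨m, hm⟩ := Set.mem_iUnion.1 hu
        exact hUm m u hm
      · exact hVm u hu
      · exact hWm u hu
    · intro A hA
      have hdec : A = (⋃ m, emb m '' (emb m ⁻¹' A)) ∪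
          ((fun y => Sum.inr (Sum.inl y)) '' ((fun y => Sum.inr (Sum.inl y)) ⁻¹' A) ∪
          (fun b => Sum.inr (Sum.inr b)) '' ((fun b => Sum.inr (Sum.inr b)) ⁻¹' A)) := by
        apply Set.Subset.antisymm
        · rintro (⟨m, s⟩ | y | b) h
          · exact Or.inl (Set.mem_iUnion.2 ⟨m, s, h, rfl⟩)
          · exact Or.inr (Or.inl ⟨y, h, rfl⟩)
          · exact Or.inr (Or.inr ⟨b, h, rfl⟩)
        · refine Set.union_subset (Set.iUnion_subset fun m => Set.image_preimage_subset _ _)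
            (Set.union_subset (Set.image_preimage_subset _ _) (Set.image_preimage_subset _ _))
      rw [hdec]
      refine MeasurableSet.union (MeasurableSet.iUnion fun m => ?_) (MeasurableSet.union ?_ ?_)
      · exact MeasurableSpace.generateFrom_mono
          ((Set.subset_iUnion U m).trans Set.subset_union_left) _
          (hUg m _ (measurable_emb m hA))
      · exact MeasurableSpace.generateFrom_mono
          (Set.subset_union_left.trans Set.subset_union_right) _
          (hVg _ (measurable_embY hA))
      · exact MeasurableSpace.generateFrom_mono
          (Set.subset_union_right.trans Set.subset_union_right) _
          (hWg _ (embB_embedding.measurable hA))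
  · rintro (⟨m, s⟩ | y | b) t h
    · exact piece_sep (emb_embedding m) (hS m) s t h
    · exact piece_sep embY_embedding hY y t h
    · exact piece_sep embB_embedding separable_Bool b t h

variable (M : ∀ m, LMP (S m) (L m)) (e : ∀ m, ℕ → Option (L m)) (st : ∀ m, Bool → S m)
  (g : ℕ → Y → Bool) (ν : Bool → Measure Y)

/-- The kernel of the `m`-th component for the `n`-th label. -/
noncomputable def ker (m n : ℕ) (s : S m) : Measure (S m) :=
  match e m n with
  | some a => (M m).τ a s
  | none => 0

/-- The kernels of the sum process. -/
noncomputable def tau : Lb → St S Y → Measure (St S Y)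
  | Sum.inl n, Sum.inl ⟨m, s⟩ => (ker M e m n s).map (emb m)
  | Sum.inr (Sum.inl n), Sum.inl ⟨m, _⟩ =>
      if n = m then Measure.dirac (Sum.inr (Sum.inr true)) else 0
  | Sum.inr (Sum.inr (Sum.inl n)), Sum.inr (Sum.inl y) => Measure.dirac (emb n (st n (g n y)))
  | Sum.inr (Sum.inr (Sum.inr _)), Sum.inr (Sum.inr b) =>
      (ν b).map (fun y => Sum.inr (Sum.inl y))
  | _, _ => 0

theorem ker_le (m n : ℕ) (s : S m) : ker M e m n s Set.univ ≤ 1 := by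
  unfold ker
  split
  · exact (M m).prob_le_one _ _
  · simp

theorem ker_meas (m n : ℕ) {E : Set (S m)} (hE : MeasurableSet E) :
    Measurable fun s => ker M e m n s E := by
  unfold ker
  split
  · exact (M m).measurable_eval _ _ hE
  · simp

/-- The sum process. -/
noncomputable def proc (hg : ∀ n, Measurable (g n)) (hν : ∀ b, ν b Set.univ ≤ 1) :
    LMP (St S Y) Lb where
  τ := tau M e st g ν
  prob_le_one := by
    rintro (n | n | n | n) (⟨m, s⟩ | y | b) <;> simp only [tau] <;> try simp
    · rw [Measure.map_apply (measurable_emb m) MeasurableSet.univ]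
      exact ker_le M e m n s
    · split <;> simp
    · rw [Measure.map_apply measurable_embY MeasurableSet.univ]
      exact hν b
  measurable_eval := by
    rintro (n | n | n | n) E hE <;> refine measurable_St (fun m => ?_) ?_ <;>
      simp only [tau, emb] <;> try simp
    · simp only [Measure.map_apply (measurable_emb _) hE]
      exact ker_meas M e m n (measurable_emb m hE)
    · have h1 : Measurable fun b => Measure.dirac (emb n (st n b) : St S Y) E :=
        measurable_from_top
      exact h1.comp (hg n)

variable {M e st g ν} {hg : ∀ n, Measurable (g n)} {hν : ∀ b, ν b Set.univ ≤ 1}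

theorem tau_ker (m n : ℕ) (s : S m) {E : Set (St S Y)} (hE : MeasurableSet E) :
    (proc M e st g ν hg hν).τ (Sum.inl n) (emb m s) E = ker M e m n s (emb m ⁻¹' E) := by
  change (ker M e m n s).map (emb m) E = _
  rw [Measure.map_apply (measurable_emb m) hE]

theorem tau_mark (m n : ℕ) (s : S m) :
    (proc M e st g ν hg hν).τ (Sum.inr (Sum.inl n)) (emb m s) =
      if n = m then Measure.dirac (Sum.inr (Sum.inr true)) else 0 := rfl

theorem It_emb (m : ℕ) (α : Ordinal.{0}) {s t : S m} (h : (s, t) ∈ (M m).It α) :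
    (emb m s, emb m t) ∈ (proc M e st g ν hg hν).It α := by
  induction α using Ordinal.limitRecOn generalizing s t with
  | zero =>
    rw [LMP.It_zero] at h ⊢
    obtain ⟨Λ, h1, h2, h3⟩ := h
    have hc : ∀ p : Prop, {s : S m | p} ∈ Λ := by
      intro p
      by_cases hp : p
      · have := h1.compl_mem _ h1.empty_mem
        simpa [hp] using this
      · simpa [hp] using h1.empty_mem
    refine ⟨{A | MeasurableSet A ∧ emb m ⁻¹' A ∈ Λ}, ⟨fun A hA => hA.1,
      ⟨MeasurableSet.empty, h1.empty_mem⟩, fun A hA => ⟨hA.1.compl, h1.compl_mem _ hA.2⟩,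
      fun f hf => ⟨MeasurableSet.iUnion fun n => (hf n).1, ?_⟩⟩, ?_, fun A hA => h3 _ hA.2⟩
    · rw [Set.preimage_iUnion]
      exact h1.iUnion_mem _ fun n => (hf n).2
    · intro A hA q hq hq' a
      refine ⟨measurableSet_lt measurable_const
        ((proc M e st g ν hg hν).measurable_eval a A hA.1), ?_⟩
      rcases a with n | n | n | n
      · have : emb m ⁻¹' {s | ENNReal.ofReal (q : ℝ) <
            (proc M e st g ν hg hν).τ (Sum.inl n) s A} =
            {s | ENNReal.ofReal (q : ℝ) < ker M e m n s (emb m ⁻¹' A)} := by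
          ext s
          change ENNReal.ofReal (q : ℝ) < (proc M e st g ν hg hν).τ (Sum.inl n) (emb m s) A ↔
            ENNReal.ofReal (q : ℝ) < ker M e m n s (emb m ⁻¹' A)
          rw [tau_ker m n s hA.1]
        rw [this]
        unfold ker
        split
        · exact h2 _ hA.2 q hq hq' _
        · exact hc _
      · exact hc (ENNReal.ofReal (q : ℝ) <
          (if n = m then Measure.dirac (Sum.inr (Sum.inr true)) else 0 : Measure (St S Y)) A)
      · exact hc (ENNReal.ofReal (q : ℝ) < (0 : Measure (St S Y)) A)
      · exact hc (ENNReal.ofReal (q : ℝ) < (0 : Measure (St S Y)) A)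
  | add_one o ih =>
    rw [LMP.It_succ] at h ⊢
    intro a E hE
    rcases a with n | n | n | n
    · simp only [tau_ker _ _ _ hE.1]
      unfold ker
      split
      · exact h _ _ ⟨measurable_emb m hE.1, fun x hx s hs => hE.2 hx (ih hs)⟩
      · rfl
    · rfl
    · rfl
    · rfl
  | limit o ho ih =>
    rw [LMP.It_limit _ ho, Set.mem_iInter₂] at h ⊢
    exact fun b hb => ih b hb (h b hb)

theorem stateBisim_emb (he : ∀ m a, ∃ n, e m n = some a) (m : ℕ) {s t : S m}
    (h : (emb m s, emb m t) ∈ (proc M e st g ν hg hν).stateBisim) :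
    (s, t) ∈ (M m).stateBisim := by
  have hb := (proc M e st g ν hg hν).stateBisim_isStateBisim
  refine ⟨{p | (emb m p.1, emb m p.2) ∈ (proc M e st g ν hg hν).stateBisim}, ⟨?_, ?_⟩, h⟩
  · exact fun p hp => hb.1 _ hp
  · intro p hp a C hC
    have hC' : emb m '' C ∈ LMP.sigmaCl (proc M e st g ν hg hν).stateBisim := by
      refine ⟨(emb_embedding m).measurableSet_image.2 hC.1, ?_⟩
      rintro _ ⟨c, hc, rfl⟩ u hu
      have h1 := hb.2 _ hu (Sum.inr (Sum.inl m)) Set.univ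
        ⟨MeasurableSet.univ, fun _ _ _ _ => trivial⟩
      simp only [tau_mark, if_true, measure_univ] at h1
      rcases u with ⟨k, u⟩ | u | u
      · change 1 = (if m = k then Measure.dirac (Sum.inr (Sum.inr true)) else 0 :
          Measure (St S Y)) Set.univ at h1
        by_cases hk : m = k
        · subst hk
          exact ⟨u, hC.2 hc hu, rfl⟩
        · simp [hk] at h1
      · change 1 = (0 : Measure (St S Y)) Set.univ at h1
        simp at h1
      · change 1 = (0 : Measure (St S Y)) Set.univ at h1
        simp at h1
    obtain ⟨n, hn⟩ := he m a
    have h1 := hb.2 _ hp (Sum.inl n) _ hC'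
    simp only [tau_ker _ _ _ hC'.1, Set.preimage_image_eq _ (emb_inj m), ker, hn] at h1
    exact h1

theorem It_Y (n : ℕ) (α : Ordinal.{0})
    (hα : ∀ m, n ≤ m → (st m true, st m false) ∈ (M m).It α) {y y' : Y}
    (hy : ∀ m < n, g m y = g m y') :
    ((Sum.inr (Sum.inl y), Sum.inr (Sum.inl y')) : St S Y × St S Y) ∈
      (proc M e st g ν hg hν).It (α + 1) := by
  rw [LMP.It_succ]
  intro a E hE
  rcases a with m | m | m | m
  · rfl
  · rfl
  · change Measure.dirac (emb m (st m (g m y))) E = Measure.dirac (emb m (st m (g m y'))) E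
    by_cases hgm : g m y = g m y'
    · rw [hgm]
    · have hm : n ≤ m := by
        by_contra hlt
        exact hgm (hy m (not_le.1 hlt))
      have h1 : (emb m (st m true), emb m (st m false)) ∈ (proc M e st g ν hg hν).It α :=
        It_emb m α (hα m hm)
      have h2 := LMP.It_symm _ _ h1
      have key : emb m (st m true) ∈ E ↔ emb m (st m false) ∈ E :=
        ⟨fun h => hE.2 h h1, fun h => hE.2 h h2⟩
      have key2 : ∀ b, emb m (st m b) ∈ E ↔ emb m (st m true) ∈ E := by
        intro b; cases b
        · exact key.symm
        · rfl
      rw [Measure.dirac_apply' _ hE.1, Measure.dirac_apply' _ hE.1]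
      by_cases hb : emb m (st m true) ∈ E
      · rw [Set.indicator_of_mem ((key2 _).2 hb), Set.indicator_of_mem ((key2 _).2 hb)]; rfl
      · rw [Set.indicator_of_notMem (fun h => hb ((key2 _).1 h)),
          Set.indicator_of_notMem (fun h => hb ((key2 _).1 h))]
  · rfl

theorem It_B (hcyl : ∀ n E, (∀ y y', (∀ m < n, g m y = g m y') → y ∈ E → y' ∈ E) →
      ν true E = ν false E) (n : ℕ) (α : Ordinal.{0})
    (hα : ∀ m, n ≤ m → (st m true, st m false) ∈ (M m).It α) :
    ((Sum.inr (Sum.inr true), Sum.inr (Sum.inr false)) : St S Y × St S Y) ∈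
      (proc M e st g ν hg hν).It (α + 1 + 1) := by
  rw [LMP.It_succ]
  intro a E hE
  rcases a with m | m | m | m
  · rfl
  · rfl
  · rfl
  · change (ν true).map (fun y => Sum.inr (Sum.inl y)) E =
      (ν false).map (fun y => Sum.inr (Sum.inl y)) E
    rw [Measure.map_apply measurable_embY hE.1, Measure.map_apply measurable_embY hE.1]
    refine hcyl n _ fun y y' hy hyE => ?_
    exact hE.2 hyE (It_Y n α hα hy)

theorem stateBisim_B (he : ∀ m a, ∃ n, e m n = some a)
    (hgs : ∀ y y', (∀ n, g n y = g n y') → y = y')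
    (hst : ∀ m, (st m true, st m false) ∉ (M m).stateBisim)
    (hV : ∃ V, MeasurableSet V ∧ ν true V ≠ ν false V) :
    ((Sum.inr (Sum.inr true), Sum.inr (Sum.inr false)) : St S Y × St S Y) ∉
      (proc M e st g ν hg hν).stateBisim := by
  intro h
  obtain ⟨V, hVm, hVne⟩ := hV
  have hb := (proc M e st g ν hg hν).stateBisim_isStateBisim
  apply hVne
  have hV' : (fun y => Sum.inr (Sum.inl y)) '' V ∈
      LMP.sigmaCl (proc M e st g ν hg hν).stateBisim := by
    refine ⟨embY_embedding.measurableSet_image.2 hVm, ?_⟩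
    rintro _ ⟨v, hv, rfl⟩ u hu
    have h1 := hb.2 _ hu (Sum.inr (Sum.inr (Sum.inl 0))) Set.univ
      ⟨MeasurableSet.univ, fun _ _ _ _ => trivial⟩
    change Measure.dirac (emb 0 (st 0 (g 0 v))) Set.univ = _ at h1
    rw [measure_univ] at h1
    rcases u with ⟨k, u⟩ | u | u
    · change 1 = (0 : Measure (St S Y)) Set.univ at h1
      simp at h1
    · have : v = u := by
        refine hgs v u fun n => ?_
        by_contra hne
        have h2 : (emb n (st n (g n v)), emb n (st n (g n u))) ∈
            (proc M e st g ν hg hν).stateBisim := by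
          refine LMP.stateBisim_of_sep _ fun E hE h3 => ?_
          have h4 := hb.2 _ hu (Sum.inr (Sum.inr (Sum.inl n))) E hE
          change Measure.dirac (emb n (st n (g n v))) E = Measure.dirac (emb n (st n (g n u))) E
            at h4
          rw [Measure.dirac_apply' _ hE.1, Measure.dirac_apply' _ hE.1,
            Set.indicator_of_mem h3] at h4
          by_contra h5
          rw [Set.indicator_of_notMem h5] at h4
          simp at h4
        have h3 := stateBisim_emb he n h2
        have h4 := LMP.stateBisim_symm _ h3
        cases hv : g n v <;> cases hu : g n u <;> rw [hv, hu] at h3 h4 hne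
        · exact hne rfl
        · exact hst n h4
        · exact hst n h3
        · exact hne rfl
      exact ⟨v, hv, by rw [this]⟩
    · change 1 = (0 : Measure (St S Y)) Set.univ at h1
      simp at h1
  have h1 := hb.2 _ h (Sum.inr (Sum.inr (Sum.inr ()))) _ hV'
  change (ν true).map (fun y => Sum.inr (Sum.inl y)) _ =
      (ν false).map (fun y => Sum.inr (Sum.inl y)) _ at h1
  rw [Measure.map_apply measurable_embY hV'.1, Measure.map_apply measurable_embY hV'.1,
    Set.preimage_image_eq _ (fun a b h => by simpa using h)] at h1
  exact h1

end Constr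

theorem exists_big (γ : ℕ → Ordinal.{0}) (hγ : Monotone γ)
    (h : ∀ m, ∃ z ∈ zhouOrdinals, γ m < z) :
    ∃ Q : PackedLMP, Q.Separable ∧ ∃ z : Ordinal.{0}, Q.IsZhou z ∧ (⨆ m, (γ m + 1 + 1)) < z := by
  have h' : ∀ m, ∃ P : PackedLMP, P.Separable ∧ letI := P.mS
      ∃ p : P.S × P.S, p ∈ P.M.It (γ m) ∧ p ∉ P.M.stateBisim := by
    intro m
    obtain ⟨z, ⟨P, hP, hz⟩, hlt⟩ := h m
    letI := P.mS
    refine ⟨P, hP, ?_⟩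
    have hne : P.M.It (γ m) ≠ P.M.stateBisim := hz.2 _ hlt
    by_contra hcon
    push Not at hcon
    exact hne (Set.Subset.antisymm hcon (P.M.stateBisim_subset_It _))
  choose P hP p hp hpn using h'
  obtain ⟨Y, mY, g, ν, hY, hg, hgs, hν, hcyl, hV⟩ := exists_gadget
  letI := fun m => (P m).mS
  have he : ∀ m, ∃ e : ℕ → Option (P m).L, Function.Surjective e := fun m => by
    haveI := (P m).cL
    exact exists_surjective_nat _
  choose e he using he
  let st : ∀ m, Bool → (P m).S := fun m b => if b then (p m).1 else (p m).2
  let Q := Constr.proc (fun m => (P m).M) e st g ν hg hν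
  obtain ⟨z, hz⟩ := Q.exists_isZhou
  refine ⟨⟨Constr.St (fun m => (P m).S) Y, inferInstance, Constr.Lb, inferInstance, Q⟩,
    Constr.separable_St hP hY, z, hz, ?_⟩
  by_contra hle
  rw [not_lt] at hle
  have h1 := Constr.stateBisim_B (M := fun m => (P m).M) (e := e) (st := st) (g := g) (ν := ν)
    (hg := hg) (hν := hν) (fun m a => he m (some a)) hgs hpn hV
  apply h1
  have h2 : Q.It z = Q.stateBisim := hz.1
  change _ ∈ Q.stateBisim
  rw [← h2]
  apply Q.It_anti hle
  refine Q.It_mem_of_sup (fun m => γ m + 1 + 1) (fun n => ?_) (fun o ho => ?_)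
  · exact Constr.It_B hcyl n (γ n) fun m hm => (P m).M.It_anti (hγ hm) (hp m)
  · exact (Ordinal.lt_iSup_iff).1 ho

theorem bddAbove_zhou : BddAbove zhouOrdinals := by
  refine ⟨(Order.succ (Cardinal.mk (Set (Set ℕ × Set ℕ)))).ord, ?_⟩
  rintro z ⟨P, hP, hz⟩
  letI := P.mS
  obtain ⟨c, -, hc⟩ := SeparableMeasurableSpace.exists_seq hP
  let f : P.S → Set ℕ := fun s => {n | s ∈ c n}
  have hf : Function.Injective f := fun s t h => hc s t fun n => by
    have : n ∈ f s ↔ n ∈ f t := by rw [h]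
    exact this
  refine (Cardinal.lt_ord.2 (Order.lt_succ_of_le ?_)).le
  rw [← Cardinal.mk_toType]
  have hlt : ∀ a : z.ToType, (Ordinal.ToType.toOrd a : Ordinal.{0}) < z := fun a =>
    (Ordinal.ToType.toOrd a).2
  have key : ∀ a b : Ordinal.{0}, b < z → P.M.It a = P.M.It b → a ≤ b := by
    intro a b hb hab
    by_contra hn
    exact hz.2 b hb (P.M.It_eq_of_eq (not_le.1 hn) hab.symm)
  refine Cardinal.mk_le_of_injective (f := fun a : z.ToType =>
    (Prod.map f f) '' P.M.It (Ordinal.ToType.toOrd a : Ordinal.{0})) ?_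
  intro a b hab
  have h1 := (hf.prodMap hf).image_injective hab
  have h2 : (Ordinal.ToType.toOrd a : Ordinal.{0}) = Ordinal.ToType.toOrd b :=
    le_antisymm (key _ _ (hlt b) h1) (key _ _ (hlt a) h1.symm)
  exact Ordinal.ToType.mk.symm.injective (Subtype.ext h2)

theorem main_aux (z0 : Ordinal.{0}) (hz0 : z0 ∈ zhouOrdinals) (hpos : 0 < z0) :
    Cardinal.aleph0 < (sSup zhouOrdinals).cof := by
  by_contra hcon
  rw [not_lt] at hcon
  set z := sSup zhouOrdinals with hzdef
  have hb := bddAbove_zhou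
  have hzpos : 0 < z := hpos.trans_le (le_csSup hb hz0)
  obtain ⟨s, hs, hcard⟩ := Order.exists_cof_eq (Set.Iio z)
  have hsc : s.Countable := by
    rw [← Cardinal.le_aleph0_iff_set_countable, hcard, Ordinal.cof_Iio, ← Ordinal.lift_cof]
    exact Cardinal.lift_le_aleph0.2 hcon
  have hsne : s.Nonempty := by
    obtain ⟨x, hx, -⟩ := hs ⟨0, hzpos⟩
    exact ⟨x, hx⟩
  obtain ⟨f, hf⟩ := hsc.exists_eq_range hsne
  let γ : ℕ → Ordinal.{0} := partialSups (fun n => (f n : Ordinal.{0}))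
  have hγ : ∀ n, γ n < z := by
    intro n
    induction n with
    | zero =>
      have : γ 0 = (f 0 : Ordinal.{0}) := partialSups_zero _
      rw [this]
      exact (f 0).2
    | succ n ih =>
      have : γ (n + 1) = γ n ⊔ (f (n + 1) : Ordinal.{0}) := partialSups_add_one _ _
      rw [this]
      exact max_lt ih (f (n + 1)).2
  obtain ⟨Q, hQ, y, hy, hlt⟩ := exists_big γ (partialSups _).monotone fun m => by
    exact exists_lt_of_lt_csSup ⟨z0, hz0⟩ (hγ m)
  have hyz : y ≤ z := le_csSup hb ⟨Q, hQ, hy⟩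
  have hlt2 := hlt.trans_le hyz
  obtain ⟨x, hx, hle⟩ := hs ⟨_, hlt2⟩
  rw [hf] at hx
  obtain ⟨n, rfl⟩ := hx
  have h1 : (f n : Ordinal.{0}) ≤ γ n := le_partialSups (fun n => (f n : Ordinal.{0})) n
  have h2 : γ n + 1 + 1 ≤ ⨆ m, (γ m + 1 + 1) := Ordinal.le_iSup (fun m => γ m + 1 + 1) n
  have h3 : (⨆ m, (γ m + 1 + 1)) ≤ (f n : Ordinal.{0}) := hle
  have h4 : γ n < γ n + 1 + 1 :=
    (Order.lt_add_one_iff.2 le_rfl).trans (Order.lt_add_one_iff.2 le_rfl)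
  exact absurd (h4.trans_le (h2.trans (h3.trans h1))) (lt_irrefl _)

/-- Given a sequence of separable LMPs whose Zhou ordinals `ζ_m` are strictly increasing with
`ζ₀ > 0`, there is a separable LMP whose Zhou ordinal is at least `(sup_m ζ_m) + 1`.
Consequently, the supremum of the Zhou ordinals of separable LMPs has uncountable
cofinality. -/
theorem exists_sepLMP_zhou_ge_sup_succ
    (P : ℕ → PackedLMP) (ζ : ℕ → Ordinal.{0})
    (hsep : ∀ m, (P m).Separable) (hZ : ∀ m, (P m).IsZhou (ζ m))
    (hmono : StrictMono ζ) (h0 : 0 < ζ 0) :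
    (∃ Q : PackedLMP, Q.Separable ∧
      ∃ z : Ordinal.{0}, Q.IsZhou z ∧ (⨆ m, ζ m) + 1 ≤ z) ∧
    Cardinal.aleph0 < (sSup zhouOrdinals).cof := by
  refine ⟨?_, main_aux (ζ 0) ⟨P 0, hsep 0, hZ 0⟩ h0⟩
  obtain ⟨Q, hQ, z, hz, hlt⟩ := exists_big ζ hmono.monotone fun m =>
    ⟨ζ (m + 1), ⟨P (m + 1), hsep _, hZ _⟩, hmono (Nat.lt_succ_self m)⟩
  refine ⟨Q, hQ, z, hz, Order.add_one_le_of_lt (lt_of_le_of_lt ?_ hlt)⟩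
  refine Ordinal.iSup_le fun m => ?_
  refine le_trans ?_ (Ordinal.le_iSup (fun m => ζ m + 1 + 1) m)
  exact ((Order.lt_add_one_iff.2 le_rfl).trans (Order.lt_add_one_iff.2 le_rfl)).le
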